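/- Let B be a smooth generalized Bayesian network. Then for every cutset C of B, the limit semantics [B]_{Lim-C} is a singleton, and Lim(B, C, γ0) is defined for every initial distribution γ0 over assignments of C. -/

import Mathlib

open Filter
open scoped Classical

noncomputable section

namespace GBNPaper

variable {V : Type} [Fintype V] [DecidableEq V]

/-- A distribution over a finite type: nonnegative values summing to one. -/
def IsDist {α : Type} [Fintype α] (μ : α → ℝ) : Prop :=
  (∀ a, 0 ≤ μ a) ∧ ∑ a, μ a = 1

/-- The set of parents of a node `X` w.r.t. an edge set `E`. -/
def Pre (E : Finset (V × V)) (X : V) : Finset V :=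
  (E.filter fun e => e.2 = X).image Prod.fst

/-- The set of initial (parentless) nodes. -/
def InitSet (E : Finset (V × V)) : Finset V :=
  Finset.univ.filter fun X => Pre E X = ∅

/-- Assignments over a subset `U` of the nodes. -/
abbrev Asg (U : Finset V) : Type := {x // x ∈ U} → Bool

/-- A full assignment `b` agrees with a partial assignment `d` on `U`. -/
abbrev Agrees (b : V → Bool) (U : Finset V) (d : Asg U) : Prop :=
  ∀ x : {x // x ∈ U}, b x.1 = d x

/-- A generalized Bayesian network over node set `V`. -/
structure GBN (V : Type) [Fintype V] [DecidableEq V] where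
  /-- the directed edges -/
  edges : Finset (V × V)
  /-- CPT entries: the probability of `X = T` given an assignment of the parents of `X` -/
  cpt : (X : V) → Asg (Pre edges X) → ℝ
  cpt_nonneg : ∀ X b, 0 ≤ cpt X b
  cpt_le_one : ∀ X b, cpt X b ≤ 1
  /-- the initial distribution over assignments of the initial nodes -/
  ι : Asg (InitSet edges) → ℝ
  ι_dist : IsDist ι

/-- Probability of an event (set of full assignments) under `μ`. -/
def probIf (μ : (V → Bool) → ℝ) (p : (V → Bool) → Prop) : ℝ :=
  ∑ b : V → Bool, if p b then μ b else 0

/-- The marginal distribution of `μ` on `U`. -/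
def marginal (μ : (V → Bool) → ℝ) (U : Finset V) : Asg U → ℝ :=
  fun d => probIf μ fun b => Agrees b U d

/-- `Pr(X = v | parents as given by b)`. -/
def copyProb (B : GBN V) (X : V) (v : Bool) (b : V → Bool) : ℝ :=
  if v then B.cpt X (fun p => b p.1) else 1 - B.cpt X (fun p => b p.1)

/-- The standard BN semantics (chain rule) of a GBN. -/
def distBN (B : GBN V) (b : V → Bool) : ℝ :=
  B.ι (fun x => b x.1) *
    ∏ X ∈ Finset.univ \ InitSet B.edges, copyProb B X (b X) b

/-- The edge set contains no directed cycle. -/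
def Acyclic (E : Finset (V × V)) : Prop :=
  ∀ x : V, ¬ Relation.TransGen (fun a b => (a, b) ∈ E) x x

/-- `C` is a cutset: every directed cycle contains a node of `C`. -/
def IsCutset (E : Finset (V × V)) (C : Finset V) : Prop :=
  ∀ x : V, ¬ Relation.TransGen (fun a b => (a, b) ∈ E ∧ a ∉ C ∧ b ∉ C) x x

/-- The standard BN semantics of the `C`-dissected GBN `B↑C↑γ`, as a joint
distribution over assignments of the original nodes `V` together with
assignments of the copies `C'` of the cutset nodes. -/
def distDissect (B : GBN V) (C : Finset V) (γ : Asg C → ℝ)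
    (b : V → Bool) (c : Asg C) : ℝ :=
  B.ι (fun x => b x.1) * γ (fun x => b x.1) *
    (∏ X ∈ (Finset.univ \ InitSet B.edges) \ C, copyProb B X (b X) b) *
    ∏ Y ∈ C.attach, copyProb B Y.1 (c Y) b

/-- `Next(B,C,γ)`: restrict `dist_BN(B↑C↑γ)` to `(V∖C) ∪ C'` and re-identify
the copies with the original cutset nodes. -/
def Next (B : GBN V) (C : Finset V) (γ : Asg C → ℝ) (a : V → Bool) : ℝ :=
  ∑ b : V → Bool,
    if ∀ x : V, x ∉ C → b x = a x then distDissect B C γ b (fun y => a y.1) else 0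

/-- `Extend(B,C,γ) = dist_BN(B↑C↑γ)|_V`. -/
def Extend (B : GBN V) (C : Finset V) (γ : Asg C → ℝ) (a : V → Bool) : ℝ :=
  ∑ c : Asg C, distDissect B C γ a c

/-- Dirac (point) distribution. -/
def DiracD {α : Type} [DecidableEq α] (b : α) : α → ℝ := fun c => if c = b then 1 else 0

/-- Transition matrix of the cutset Markov chain `M_{B↑C}`:
`P(b,c) = Next(B,C,Dirac(b))|_C (c)`. -/
def cutsetP (B : GBN V) (C : Finset V) (b c : Asg C) : ℝ :=
  marginal (Next B C (DiracD b)) C c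

/-- Vector-matrix multiplication `γ·P`. -/
def vecMul {α : Type} [Fintype α] (γ : α → ℝ) (P : α → α → ℝ) : α → ℝ :=
  fun c => ∑ b, γ b * P b c

/-- The transient distributions `γ0·P^n`. -/
def matIter {α : Type} [Fintype α] (P : α → α → ℝ) (γ0 : α → ℝ) : ℕ → (α → ℝ)
  | 0 => γ0
  | n + 1 => vecMul (matIter P γ0 n) P

/-- The sequence `γ_{n+1} = Next(B,C,γ_n)|_C`. -/
def nextSeq (B : GBN V) (C : Finset V) (γ0 : Asg C → ℝ) : ℕ → (Asg C → ℝ)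
  | 0 => γ0
  | n + 1 => marginal (Next B C (nextSeq B C γ0 n)) C

/-- Cesàro averages of a sequence of vectors. -/
def cesaro {α : Type} (f : ℕ → α → ℝ) (n : ℕ) : α → ℝ :=
  fun a => (∑ i ∈ Finset.range (n + 1), f i a) / (n + 1)

/-- The Markov chain semantics `[B]_{MC-C}`: image of
`γ0 ↦ Extend(B,C,lrf^{γ0})` over all initial cutset distributions `γ0`,
where `lrf^{γ0}` is the Cesàro limit of the transient distributions. -/
def MCSem (B : GBN V) (C : Finset V) : Set ((V → Bool) → ℝ) :=
  { μ | ∃ γ0 γ, IsDist γ0 ∧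
      Tendsto (cesaro (matIter (cutsetP B C) γ0)) atTop (nhds γ) ∧
      μ = Extend B C γ }

/-- The limit semantics `[B]_{Lim-C}`. -/
def LimSem (B : GBN V) (C : Finset V) : Set ((V → Bool) → ℝ) :=
  { μ | ∃ γ0 γ, IsDist γ0 ∧
      Tendsto (nextSeq B C γ0) atTop (nhds γ) ∧
      μ = Extend B C γ }

/-- The limit average semantics `[B]_{LimAvg-C}`. -/
def LimAvgSem (B : GBN V) (C : Finset V) : Set ((V → Bool) → ℝ) :=
  { μ | ∃ γ0 γ, IsDist γ0 ∧
      Tendsto (cesaro (nextSeq B C γ0)) atTop (nhds γ) ∧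
      μ = Extend B C γ }

/-- The Markov chain semantics in stationary-distribution form:
`{ Extend(B,C,γ) : γ a distribution with γ = γ·P }`. -/
def MCStatSem (B : GBN V) (C : Finset V) : Set ((V → Bool) → ℝ) :=
  { μ | ∃ γ : Asg C → ℝ, IsDist γ ∧ γ = vecMul γ (cutsetP B C) ∧ μ = Extend B C γ }

/-- Strong CPT-consistency of `μ` for node `X`. -/
def StrongCPT (B : GBN V) (μ : (V → Bool) → ℝ) (X : V) : Prop :=
  ∀ c : Asg (Pre B.edges X),
    probIf μ (fun f => f X = true ∧ Agrees f (Pre B.edges X) c) =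
      probIf μ (fun f => Agrees f (Pre B.edges X) c) * B.cpt X c

/-- Weak CPT-consistency of `μ` for node `X`. -/
def WeakCPT (B : GBN V) (μ : (V → Bool) → ℝ) (X : V) : Prop :=
  probIf μ (fun f => f X = true) =
    ∑ c : Asg (Pre B.edges X),
      probIf μ (fun f => Agrees f (Pre B.edges X) c) * B.cpt X c

/-- The CPT semantics `[B]_{Cpt}`. -/
def CptSem (B : GBN V) : Set ((V → Bool) → ℝ) :=
  { μ | IsDist μ ∧ marginal μ (InitSet B.edges) = B.ι ∧
      ∀ X, X ∉ InitSet B.edges → StrongCPT B μ X }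

/-- `(X ⊥ Y | Z) ∈ Indep(μ)`. -/
def IndepTriple (μ : (V → Bool) → ℝ) (X Y Z : Finset V) : Prop :=
  ∀ (a : Asg X) (b : Asg Y) (c : Asg Z),
    probIf μ (fun f => Agrees f Y b ∧ Agrees f Z c) = 0 ∨
    probIf μ (fun f => Agrees f X a ∧ Agrees f Y b ∧ Agrees f Z c) /
        probIf μ (fun f => Agrees f Y b ∧ Agrees f Z c) =
      probIf μ (fun f => Agrees f X a ∧ Agrees f Z c) /
        probIf μ (fun f => Agrees f Z c)

def PairwiseDisjoint3 (X Y Z : Finset V) : Prop :=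
  Disjoint X Y ∧ Disjoint X Z ∧ Disjoint Y Z

/-- `Indep(μ)` as a set of triples. -/
def IndepSet (μ : (V → Bool) → ℝ) : Set (Finset V × Finset V × Finset V) :=
  { t | PairwiseDisjoint3 t.1 t.2.1 t.2.2 ∧ IndepTriple μ t.1 t.2.1 t.2.2 }

/-- The CPT-I semantics `[B]_{Cpt-I}`. -/
def CptISem (B : GBN V) (I : Set (Finset V × Finset V × Finset V)) :
    Set ((V → Bool) → ℝ) :=
  { μ | μ ∈ CptSem B ∧ I ⊆ IndepSet μ }

/-! d-separation -/

def Adjacent (E : Finset (V × V)) (x y : V) : Prop := (x, y) ∈ E ∨ (y, x) ∈ E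

/-- Reachability along directed edges (including the node itself). -/
def Reaches (E : Finset (V × V)) (x y : V) : Prop :=
  Relation.ReflTransGen (fun a b => (a, b) ∈ E) x y

/-- An intermediate triple `a, w, b` on a path blocks it given `Z`:
either `w ∈ Z` and `w` lies in a chain or a fork, or `w` lies in a collider
and no node reachable from `w` (including `w`) is in `Z`. -/
def BlockedTriple (E : Finset (V × V)) (Z : Finset V) (a w b : V) : Prop :=
  (w ∈ Z ∧ (((a, w) ∈ E ∧ (w, b) ∈ E) ∨ ((b, w) ∈ E ∧ (w, a) ∈ E) ∨
      ((w, a) ∈ E ∧ (w, b) ∈ E))) ∨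
  ((a, w) ∈ E ∧ (b, w) ∈ E ∧ ∀ d, Reaches E w d → d ∉ Z)

/-- A path (as a list of nodes) is blocked given `Z`. -/
def Blocked (E : Finset (V × V)) (Z : Finset V) (W : List V) : Prop :=
  ∃ l₁ a w b l₂, W = l₁ ++ a :: w :: b :: l₂ ∧ BlockedTriple E Z a w b

/-- `x` and `y` are d-separated given `Z`: every undirected simple path
from `x` to `y` is blocked given `Z`. -/
def DSepNodes (E : Finset (V × V)) (x y : V) (Z : Finset V) : Prop :=
  ∀ W : List V, W.Chain' (Adjacent E) → W.Nodup →
    W.head? = some x → W.getLast? = some y → Blocked E Z W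

def DSep (E : Finset (V × V)) (X Y Z : Finset V) : Prop :=
  ∀ x ∈ X, ∀ y ∈ Y, DSepNodes E x y Z

/-- `d-sep(G)` as a set of triples of pairwise disjoint node sets. -/
def DSepSet (E : Finset (V × V)) : Set (Finset V × Finset V × Finset V) :=
  { t | PairwiseDisjoint3 t.1 t.2.1 t.2.2 ∧ DSep E t.1 t.2.1 t.2.2 }

/-- `Close(G)`: add an edge between every ordered pair of distinct initial nodes. -/
def Close (E : Finset (V × V)) : Finset (V × V) :=
  E ∪ ((InitSet E ×ˢ InitSet E).filter fun p => p.1 ≠ p.2)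

/-- `G[C]`: remove all edges into nodes of `C` (so the nodes of `C` are initial). -/
def CutGraph (E : Finset (V × V)) (C : Finset V) : Finset (V × V) :=
  E.filter fun e => e.2 ∉ C

/-- `ι` is a product distribution: it factorizes into its single-node marginals,
i.e. the initial nodes are mutually independent under `ι`. -/
def IsProductDist {U : Finset V} (ι : Asg U → ℝ) : Prop :=
  ∀ b : Asg U,
    ι b = ∏ x : {x // x ∈ U}, ∑ b' : Asg U, if b' x = b x then ι b' else 0

/-! Markov chain notions -/

/-- Reachability in the underlying graph of a DTMC. -/
def MCReach {α : Type} (P : α → α → ℝ) (x y : α) : Prop :=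
  Relation.ReflTransGen (fun a b => 0 < P a b) x y

/-- Bottom strongly connected component of a DTMC: nonempty, closed under
reachability, and strongly connected. -/
def IsBSCC {α : Type} (P : α → α → ℝ) (D : Set α) : Prop :=
  D.Nonempty ∧ (∀ x ∈ D, ∀ y, MCReach P x y → y ∈ D) ∧
    ∀ x ∈ D, ∀ y ∈ D, MCReach P x y

/-- Walks of a given length along positive-probability transitions. -/
def walkLen {α : Type} (P : α → α → ℝ) : ℕ → α → α → Prop
  | 0, x, y => x = y
  | n + 1, x, y => ∃ z, 0 < P x z ∧ walkLen P n z y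

/-- The lengths of the cycles of `D`. -/
def CycleLens {α : Type} (P : α → α → ℝ) (D : Set α) : Set ℕ :=
  { n | 0 < n ∧ ∃ x ∈ D, walkLen P n x x }

/-- `D` is aperiodic: the gcd of the lengths of its cycles equals 1. -/
def AperiodicBSCC {α : Type} (P : α → α → ℝ) (D : Set α) : Prop :=
  ∀ d : ℕ, (∀ n ∈ CycleLens P D, d ∣ n) → d = 1

/-- `D` is periodic: the gcd of the lengths of its cycles is greater than 1. -/
def PeriodicBSCC {α : Type} (P : α → α → ℝ) (D : Set α) : Prop :=
  ∃ d : ℕ, 1 < d ∧ ∀ n ∈ CycleLens P D, d ∣ n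

/-- A GBN is smooth if all CPT entries and all values of `ι` lie in `(0,1)`. -/
def Smooth (B : GBN V) : Prop :=
  (∀ X b, B.cpt X b ∈ Set.Ioo (0 : ℝ) 1) ∧ ∀ d, B.ι d ∈ Set.Ioo (0 : ℝ) 1

/-!
`γ ↦ Next(B,C,γ)|_C` is the linear map given by the cutset matrix `P`, so `γ_n = γ₀ P ^ n`. By
smoothness there is `δ > 0` such that, given the original nodes, every assignment of the copies has
probability at least `δ`; hence every entry of `P` is at least `δ` times the sum of its row. Outside
a cutset the network is acyclic and can be summed out, so the row sums are at most one. If they all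
equal one, Doeblin's minorization argument shows that `P ^ n` converges to a matrix with identical
rows `π`. A row sum can be smaller only if `C` contains initial nodes, whose values are weighted by
both `ι` and `γ`; then every step after the first loses a fixed fraction of the mass, so `P ^ n`
converges to zero. Either way the limit of `γ_n` does not depend on `γ₀`.
-/

section PowersOfMatrices

open Matrix
open scoped Topology Matrix.Norms.Operator

theorem tendsto_of_succ_eq_mul_add {R : Type*} [NormedRing R] [HasSummableGeomSeries R]
    {u : ℕ → R} {q v : R} (hq : ‖q‖ < 1) (hu : ∀ k, u (k + 1) = u k * q + v) :
    Tendsto u atTop (𝓝 (v * ∑' k, q ^ k)) := by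
  have hsolve : u = fun k => u 0 * q ^ k + v * ∑ i ∈ Finset.range k, q ^ i := by
    funext k
    induction k with
    | zero => simp
    | succ k ih =>
      have hgeom : ∑ i ∈ Finset.range (k + 1), q ^ i = (∑ i ∈ Finset.range k, q ^ i) * q + 1 := by
        simp only [Finset.sum_range_succ', Finset.sum_mul, pow_succ, pow_zero]
      rw [hu, ih, hgeom, pow_succ]
      noncomm_ring
  have hpow := (tendsto_pow_atTop_nhds_zero_of_norm_lt_one hq).const_mul (u 0)
  have hgeom := (summable_geometric_of_norm_lt_one hq).hasSum.tendsto_sum_nat.const_mul v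
  rw [hsolve]
  simpa only [mul_zero, zero_add] using hpow.add hgeom

theorem linfty_opNorm_lt_of_sum_norm_lt {m n α : Type*} [Fintype m] [Fintype n]
    [NormedAddCommGroup α] {A : Matrix m n α} {r : ℝ} (hr : 0 < r)
    (hA : ∀ i, ∑ j, ‖A i j‖ < r) : ‖A‖ < r := by
  lift r to NNReal using hr.le
  rw [linfty_opNorm_def, NNReal.coe_lt_coe, Finset.sup_lt_iff (by exact_mod_cast hr)]
  intro i _
  rw [← NNReal.coe_lt_coe, NNReal.coe_sum]
  exact hA i

theorem mulVec_mono_of_nonneg {m n R : Type*} [Fintype n] [Semiring R] [PartialOrder R]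
    [IsOrderedRing R] {A : Matrix m n R} (hA : ∀ i j, 0 ≤ A i j) : Monotone (A *ᵥ ·) :=
  fun _ _ hxy i => dotProduct_le_dotProduct_of_nonneg_left hxy (hA i)

variable {n : Type*} [Fintype n] {P : Matrix n n ℝ}

-- At least a fraction `δ` of the mass moves to `j₀`, where a fraction `1 - ∑ j, P j₀ j` is lost.
theorem mulVec_mulVec_one_le_of_deficient_row (hP : ∀ i j, 0 ≤ P i j)
    (hrow : ∀ i, ∑ j, P i j ≤ 1) {δ : ℝ} {j₀ : n}
    (hδ : ∀ i, δ * ∑ j, P i j ≤ P i j₀) :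
    P *ᵥ (P *ᵥ 1) ≤ (1 - δ * (1 - ∑ j, P j₀ j)) • (P *ᵥ 1) := by
  have hw : P *ᵥ 1 = fun i => ∑ j, P i j := funext fun i => dotProduct_one _
  rw [hw]
  intro i
  have hloss : P i j₀ * (1 - ∑ l, P j₀ l) ≤ ∑ j, P i j * (1 - ∑ l, P j l) :=
    Finset.single_le_sum (f := fun j => P i j * (1 - ∑ l, P j l))
      (fun j _ => mul_nonneg (hP i j) (sub_nonneg.2 (hrow j))) (Finset.mem_univ j₀)
  have hδloss : δ * (∑ j, P i j) * (1 - ∑ l, P j₀ l) ≤ P i j₀ * (1 - ∑ l, P j₀ l) :=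
    mul_le_mul_of_nonneg_right (hδ i) (sub_nonneg.2 (hrow j₀))
  simp only [mul_sub, mul_one, Finset.sum_sub_distrib] at hloss hδloss
  simp only [mulVec, dotProduct, Pi.smul_apply, smul_eq_mul]
  linarith

variable [DecidableEq n]

-- Doeblin's argument: subtracting the common part `ν` of the rows leaves a matrix `Q` of norm
-- `1 - ∑ j, ν j`, and stochasticity turns `P ^ (k + 1)` into an affine function of `P ^ k`.
theorem exists_tendsto_pow_of_mem_rowStochastic (hP : P ∈ rowStochastic ℝ n) {ν : n → ℝ}
    (hν : 0 < ∑ j, ν j) (hνP : ∀ i j, ν j ≤ P i j) :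
    ∃ π : n → ℝ, Tendsto (fun k => P ^ k) atTop (𝓝 (vecMulVec 1 π)) := by
  set Q : Matrix n n ℝ := P - vecMulVec 1 ν with hQ
  have hQnorm : ‖Q‖ < 1 := linfty_opNorm_lt_of_sum_norm_lt one_pos fun i => by
    have hQi (j : n) : ‖Q i j‖ = P i j - ν j := by
      simp [hQ, abs_of_nonneg, hνP i j]
    simp only [hQi, Finset.sum_sub_distrib, sum_row_of_mem_rowStochastic hP]
    linarith
  have hstep (k : ℕ) : P ^ (k + 1) = P ^ k * Q + vecMulVec 1 ν := by
    have hone : P ^ k *ᵥ 1 = 1 := one_vecMul_of_mem_rowStochastic (pow_mem hP k)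
    rw [hQ, mul_sub, mul_vecMulVec, hone, sub_add_cancel, pow_succ]
  have : CompleteSpace (Matrix n n ℝ) := FiniteDimensional.complete ℝ _
  exact ⟨ν ᵥ* ∑' k, Q ^ k, vecMulVec_mul 1 ν _ ▸ tendsto_of_succ_eq_mul_add hQnorm hstep⟩

theorem pow_mulVec_le_pow_smul (hP : ∀ i j, 0 ≤ P i j) {w : n → ℝ} {r : ℝ} (hr : 0 ≤ r)
    (hPw : P *ᵥ w ≤ r • w) (k : ℕ) : P ^ k *ᵥ w ≤ r ^ k • w := by
  induction k with
  | zero => simp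
  | succ k ih =>
    calc P ^ (k + 1) *ᵥ w = P *ᵥ (P ^ k *ᵥ w) := by rw [pow_succ', mulVec_mulVec]
      _ ≤ P *ᵥ (r ^ k • w) := mulVec_mono_of_nonneg hP ih
      _ = r ^ k • (P *ᵥ w) := mulVec_smul _ _ _
      _ ≤ r ^ k • (r • w) := smul_le_smul_of_nonneg_left hPw (pow_nonneg hr k)
      _ = r ^ (k + 1) • w := by rw [smul_smul, pow_succ]

theorem pow_apply_nonneg (hP : ∀ i j, 0 ≤ P i j) (k : ℕ) (i j : n) : 0 ≤ (P ^ k) i j := by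
  induction k generalizing i j with
  | zero => simp [Matrix.one_apply, apply_ite]
  | succ k ih =>
    rw [pow_succ, mul_apply]
    exact Finset.sum_nonneg fun l _ => mul_nonneg (ih i l) (hP l j)

theorem tendsto_pow_zero_of_mulVec_mulVec_one_le (hP : ∀ i j, 0 ≤ P i j) {r : ℝ} (hr0 : 0 ≤ r)
    (hr1 : r < 1) (hPw : P *ᵥ (P *ᵥ 1) ≤ r • (P *ᵥ 1)) :
    Tendsto (fun k => P ^ k) atTop (𝓝 0) := by
  have hentry (k : ℕ) (i j : n) : (P ^ (k + 1)) i j ≤ r ^ k * (P *ᵥ 1) i :=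
    calc (P ^ (k + 1)) i j ≤ ∑ l, (P ^ (k + 1)) i l :=
          Finset.single_le_sum (fun l _ => pow_apply_nonneg hP (k + 1) i l) (Finset.mem_univ j)
      _ = (P ^ k *ᵥ (P *ᵥ 1)) i := by
          rw [mulVec_mulVec, ← pow_succ, mulVec, dotProduct_one]
      _ ≤ r ^ k * (P *ᵥ 1) i := pow_mulVec_le_pow_smul hP hr0 hPw k i
  refine (tendsto_add_atTop_iff_nat 1).1 (tendsto_pi_nhds.2 fun i => tendsto_pi_nhds.2 fun j => ?_)
  refine squeeze_zero (fun k => pow_apply_nonneg hP (k + 1) i j) (fun k => hentry k i j) ?_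
  simpa using (tendsto_pow_atTop_nhds_zero_of_lt_one hr0 hr1).mul_const ((P *ᵥ 1) i)

theorem exists_tendsto_pow_of_minorization [Nonempty n] (hP : ∀ i j, 0 ≤ P i j)
    (hrow : ∀ i, ∑ j, P i j ≤ 1) {δ : ℝ} (hδ : 0 < δ)
    (hδP : ∀ i j, δ * ∑ l, P i l ≤ P i j) :
    ∃ π : n → ℝ, Tendsto (fun k => P ^ k) atTop (𝓝 (vecMulVec 1 π)) := by
  by_cases hstoch : ∀ i, ∑ j, P i j = 1
  · have hν : 0 < ∑ _j : n, δ := Finset.sum_pos (fun _ _ => hδ) Finset.univ_nonempty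
    refine exists_tendsto_pow_of_mem_rowStochastic
      (mem_rowStochastic_iff_sum.2 ⟨hP, hstoch⟩) hν fun i j => ?_
    simpa only [hstoch i, mul_one] using hδP i j
  · obtain ⟨j₀, hj₀⟩ := not_forall.1 hstoch
    have hdeficit : 0 < 1 - ∑ j, P j₀ j := sub_pos.2 ((hrow j₀).lt_of_ne hj₀)
    have hsum_nonneg (i : n) : 0 ≤ ∑ j, P i j := Finset.sum_nonneg fun j _ => hP i j
    have hεP (i : n) : min δ 1 * ∑ j, P i j ≤ P i j₀ :=
      (mul_le_mul_of_nonneg_right (min_le_left δ 1) (hsum_nonneg i)).trans (hδP i j₀)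
    have hε : 0 < min δ 1 := lt_min hδ one_pos
    have hrate : 0 ≤ 1 - min δ 1 * (1 - ∑ j, P j₀ j) :=
      sub_nonneg.2 (mul_le_one₀ (min_le_right δ 1) hdeficit.le (sub_le_self 1 (hsum_nonneg j₀)))
    refine ⟨0, ?_⟩
    rw [vecMulVec_zero]
    exact tendsto_pow_zero_of_mulVec_mulVec_one_le hP hrate
      (sub_lt_self 1 (mul_pos hε hdeficit)) (mulVec_mulVec_one_le_of_deficient_row hP hrow hεP)

theorem tendsto_vecMul_pow {π : n → ℝ} (hπ : Tendsto (fun k => P ^ k) atTop (𝓝 (vecMulVec 1 π)))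
    {x : n → ℝ} (hx : ∑ i, x i = 1) : Tendsto (fun k => x ᵥ* P ^ k) atTop (𝓝 π) := by
  have hlim : x ᵥ* vecMulVec 1 π = π := by
    rw [vecMul_vecMulVec, dotProduct_one, hx, one_smul]
  have hcont : Continuous fun A : Matrix n n ℝ => x ᵥ* A :=
    continuous_const.matrix_vecMul continuous_id
  simpa only [hlim, Function.comp_def] using (hcont.tendsto (vecMulVec 1 π)).comp hπ

end PowersOfMatrices

section SummingOut

theorem sum_agree_off_eq_sum_update {ι κ M : Type*} [Fintype ι] [DecidableEq ι] [Fintype κ]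
    [DecidableEq κ] [AddCommMonoid M] (g : (ι → κ) → M) (a : ι → κ) {S : Finset ι} {i : ι}
    (hi : i ∈ S) :
    ∑ b with ∀ j ∉ S, b j = a j, g b =
      ∑ v, ∑ b with ∀ j ∉ S.erase i, b j = Function.update a i v j, g b := by
  rw [← Finset.sum_fiberwise _ fun b => b i]
  refine Finset.sum_congr rfl fun v _ => ?_
  rw [Finset.filter_filter]
  congr 1 with b
  simp only [Finset.mem_filter_univ, Finset.mem_erase, not_and]
  constructor
  · rintro ⟨hoff, rfl⟩ j hj
    rcases eq_or_ne j i with rfl | hji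
    · rw [Function.update_self]
    · rw [Function.update_of_ne hji, hoff j (hj hji)]
  · intro hoff
    refine ⟨fun j hj => ?_, by simpa using hoff i⟩
    have hji : j ≠ i := fun h => hj (h ▸ hi)
    rw [hoff j fun _ => hj, Function.update_of_ne hji]

theorem IsCutset.exists_mem_forall_mem_pre_notMem {V : Type} [Finite V] [DecidableEq V]
    {E : Finset (V × V)} {C S : Finset V} (hC : IsCutset E C) (hS : S.Nonempty)
    (hSC : Disjoint S C) : ∃ X ∈ S, ∀ p ∈ Pre E X, p ∉ S := by
  let r := Relation.TransGen fun a b => (a, b) ∈ E ∧ a ∉ C ∧ b ∉ C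
  have : Std.Irrefl r := ⟨hC⟩
  have : IsTrans V r := ⟨fun _ _ _ => Relation.TransGen.trans⟩
  obtain ⟨X, hX, hmin⟩ := (Finite.wellFounded_of_trans_of_irrefl r).has_min (S : Set V) hS
  refine ⟨X, hX, fun p hp hpS => ?_⟩
  obtain ⟨e, he, rfl⟩ := Finset.mem_image.1 hp
  obtain ⟨hedge, rfl⟩ := Finset.mem_filter.1 he
  exact hmin e.1 hpS (.single
    ⟨hedge, Finset.disjoint_left.1 hSC hpS, Finset.disjoint_left.1 hSC hX⟩)

theorem sum_copyProb (B : GBN V) (X : V) (b : V → Bool) : ∑ v, copyProb B X v b = 1 := by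
  simp [copyProb]

theorem copyProb_nonneg (B : GBN V) (X : V) (v : Bool) (b : V → Bool) :
    0 ≤ copyProb B X v b := by
  cases v
  · exact sub_nonneg.2 (B.cpt_le_one X _)
  · exact B.cpt_nonneg X _

theorem copyProb_pos {B : GBN V} {X : V} (hX : ∀ d, B.cpt X d ∈ Set.Ioo (0 : ℝ) 1) (v : Bool)
    (b : V → Bool) : 0 < copyProb B X v b := by
  cases v
  · exact sub_pos.2 (hX _).2
  · exact (hX _).1

theorem copyProb_congr {B : GBN V} {X : V} {b b' : V → Bool}
    (h : ∀ p ∈ Pre B.edges X, b p = b' p) (v : Bool) : copyProb B X v b = copyProb B X v b' := by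
  have hpar : (fun p : {p // p ∈ Pre B.edges X} => b p.1) = fun p => b' p.1 :=
    funext fun p => h p.1 p.2
  simp only [copyProb, hpar]

theorem IsCutset.sum_prod_copyProb_eq_one {B : GBN V} {C : Finset V} (hC : IsCutset B.edges C)
    {S : Finset V} (hSC : Disjoint S C) (a : V → Bool) :
    ∑ b with ∀ x ∉ S, b x = a x, ∏ X ∈ S, copyProb B X (b X) b = 1 := by
  induction S using Finset.strongInduction generalizing a with
  | H S ih =>
    rcases S.eq_empty_or_nonempty with rfl | hne
    · have hfilter : (Finset.univ.filter fun b => ∀ x ∉ (∅ : Finset V), b x = a x) = {a} := by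
        ext b
        simp [funext_iff]
      simp only [hfilter, Finset.prod_empty, Finset.sum_singleton]
    obtain ⟨X, hX, hpar⟩ := hC.exists_mem_forall_mem_pre_notMem hne hSC
    rw [sum_agree_off_eq_sum_update _ a hX, ← sum_copyProb B X a]
    refine Finset.sum_congr rfl fun v _ => ?_
    have hrest := ih (S.erase X) (Finset.erase_ssubset hX)
      (hSC.mono_left (Finset.erase_subset X S)) (Function.update a X v)
    rw [← mul_one (copyProb B X v a), ← hrest, Finset.mul_sum]
    refine Finset.sum_congr rfl fun b hb => ?_
    rw [Finset.mem_filter_univ] at hb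
    have hbX : b X = v := by simpa using hb X (Finset.notMem_erase X S)
    have hbpar : ∀ p ∈ Pre B.edges X, b p = a p := fun p hp => by
      have hpS := hpar p hp
      rw [hb p fun h => hpS (Finset.mem_of_mem_erase h),
        Function.update_of_ne (ne_of_mem_of_not_mem hX hpS).symm]
    rw [← Finset.mul_prod_erase S _ hX, hbX, copyProb_congr hbpar]

end SummingOut

section CutsetChain

open scoped Matrix

/-- The factor of the chain rule of the dissected network `B↑C↑γ` that stems from the initial nodes
of `B` and the non-initial nodes outside `C`. -/
def bodyWeight (B : GBN V) (C : Finset V) (b : V → Bool) : ℝ :=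
  B.ι (fun x => b x.1) * ∏ X ∈ (Finset.univ \ InitSet B.edges) \ C, copyProb B X (b X) b

/-- The factor of the chain rule of the dissected network `B↑C↑γ` that stems from the copies `C'`:
the probability that they take the values `c` given that the original nodes take the values `b`. -/
def copyWeight (B : GBN V) (C : Finset V) (b : V → Bool) (c : Asg C) : ℝ :=
  ∏ Y : {x // x ∈ C}, copyProb B Y.1 (c Y) b

variable {B : GBN V} {C : Finset V}

theorem bodyWeight_nonneg (b : V → Bool) : 0 ≤ bodyWeight B C b :=
  mul_nonneg (B.ι_dist.1 _) (Finset.prod_nonneg fun X _ => copyProb_nonneg B X (b X) b)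

theorem copyWeight_nonneg (b : V → Bool) (c : Asg C) : 0 ≤ copyWeight B C b c :=
  Finset.prod_nonneg fun Y _ => copyProb_nonneg B Y.1 (c Y) b

theorem copyWeight_pos (hcpt : ∀ X ∈ C, ∀ d, B.cpt X d ∈ Set.Ioo (0 : ℝ) 1) (b : V → Bool)
    (c : Asg C) : 0 < copyWeight B C b c :=
  Finset.prod_pos fun Y _ => copyProb_pos (hcpt Y.1 Y.2) (c Y) b

theorem sum_copyWeight (b : V → Bool) : ∑ c, copyWeight B C b c = 1 :=
  calc ∑ c, copyWeight B C b c = ∏ Y : {x // x ∈ C}, ∑ v, copyProb B Y.1 v b :=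
        (Fintype.prod_sum fun (Y : {x // x ∈ C}) v => copyProb B Y.1 v b).symm
    _ = 1 := by simp only [sum_copyProb, Finset.prod_const_one]

theorem distDissect_eq_mul (γ : Asg C → ℝ) (b : V → Bool) (c : Asg C) :
    distDissect B C γ b c = γ (C.restrict b) * (bodyWeight B C b * copyWeight B C b c) := by
  simp only [distDissect, bodyWeight, copyWeight, Finset.univ_eq_attach, Finset.restrict_def]
  ring

theorem marginal_Next (γ : Asg C → ℝ) (c : Asg C) :
    marginal (Next B C γ) C c = ∑ b, distDissect B C γ b c := by
  have hrestrict {a : V → Bool} (ha : Agrees a C c) : (fun y : {x // x ∈ C} => a y.1) = c :=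
    funext ha
  simp only [marginal, probIf, Next, Finset.ite_sum_zero, ← ite_and]
  rw [Finset.sum_comm]
  refine Finset.sum_congr rfl fun b _ => ?_
  let a₀ : V → Bool := fun x => if h : x ∈ C then c ⟨x, h⟩ else b x
  have ha₀ (a : V → Bool) : (Agrees a C c ∧ ∀ x, x ∉ C → b x = a x) ↔ a = a₀ := by
    constructor
    · rintro ⟨hc, hb⟩
      funext x
      by_cases hx : x ∈ C
      · simp [a₀, hx, ← hc ⟨x, hx⟩]
      · simp [a₀, hx, hb x hx]
    · rintro rfl
      exact ⟨fun x => by simp [a₀], fun x hx => by simp [a₀, hx]⟩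
  simp only [ha₀, Finset.sum_ite_eq', Finset.mem_univ, if_true]
  rw [hrestrict ((ha₀ a₀).2 rfl).1]

theorem cutsetP_eq_sum (d c : Asg C) :
    cutsetP B C d c = ∑ b with C.restrict b = d, bodyWeight B C b * copyWeight B C b c := by
  simp only [cutsetP, marginal_Next, distDissect_eq_mul, DiracD, ite_mul, one_mul, zero_mul,
    Finset.sum_filter]

theorem marginal_Next_eq_vecMul (γ : Asg C → ℝ) :
    marginal (Next B C γ) C = γ ᵥ* Matrix.of (cutsetP B C) := by
  funext c
  rw [marginal_Next, ← Finset.sum_fiberwise _ C.restrict]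
  simp only [Matrix.vecMul, dotProduct, Matrix.of_apply, cutsetP_eq_sum, Finset.mul_sum]
  refine Finset.sum_congr rfl fun d _ => ?_
  refine Finset.sum_congr rfl fun b hb => ?_
  rw [distDissect_eq_mul, (Finset.mem_filter.1 hb).2]

theorem nextSeq_eq_vecMul_pow (γ : Asg C → ℝ) (n : ℕ) :
    nextSeq B C γ n = γ ᵥ* Matrix.of (cutsetP B C) ^ n := by
  induction n with
  | zero => rw [nextSeq, pow_zero, Matrix.vecMul_one]
  | succ n ih => rw [nextSeq, marginal_Next_eq_vecMul, ih, Matrix.vecMul_vecMul, pow_succ]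

theorem cutsetP_nonneg (d c : Asg C) : 0 ≤ cutsetP B C d c := by
  rw [cutsetP_eq_sum]
  exact Finset.sum_nonneg fun b _ => mul_nonneg (bodyWeight_nonneg b) (copyWeight_nonneg b c)

theorem sum_cutsetP (d : Asg C) :
    ∑ c, cutsetP B C d c = ∑ b with C.restrict b = d, bodyWeight B C b := by
  simp only [cutsetP_eq_sum]
  rw [Finset.sum_comm]
  simp only [← Finset.mul_sum, sum_copyWeight, mul_one]

theorem exists_minorization_cutsetP (hcpt : ∀ X ∈ C, ∀ d, B.cpt X d ∈ Set.Ioo (0 : ℝ) 1) :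
    ∃ δ > 0, ∀ d c, δ * ∑ c', cutsetP B C d c' ≤ cutsetP B C d c := by
  obtain ⟨m, hm⟩ := Finite.exists_min fun p : (V → Bool) × Asg C => copyWeight B C p.1 p.2
  refine ⟨copyWeight B C m.1 m.2, copyWeight_pos hcpt m.1 m.2, fun d c => ?_⟩
  rw [sum_cutsetP, cutsetP_eq_sum, mul_comm, Finset.sum_mul]
  exact Finset.sum_le_sum fun b _ => mul_le_mul_of_nonneg_left (hm (b, c)) (bodyWeight_nonneg b)

theorem IsCutset.sum_bodyWeight_le (hC : IsCutset B.edges C) (d : Asg C)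
    (e : Asg (InitSet B.edges)) :
    ∑ b with C.restrict b = d ∧ (InitSet B.edges).restrict b = e, bodyWeight B C b ≤ B.ι e := by
  rcases Finset.eq_empty_or_nonempty (Finset.univ.filter fun b : V → Bool =>
    C.restrict b = d ∧ (InitSet B.edges).restrict b = e) with hempty | ⟨a, ha⟩
  · rw [hempty, Finset.sum_empty]
    exact B.ι_dist.1 e
  obtain ⟨rfl, rfl⟩ := (Finset.mem_filter.1 ha).2
  set S := (Finset.univ \ InitSet B.edges) \ C with hS
  have hfix (b : V → Bool) : (C.restrict b = C.restrict a ∧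
      (InitSet B.edges).restrict b = (InitSet B.edges).restrict a) ↔ ∀ x ∉ S, b x = a x := by
    simp only [funext_iff, Finset.restrict, Subtype.forall, hS, Finset.mem_sdiff, Finset.mem_univ,
      true_and, not_and_or, not_not, or_imp, forall_and, and_comm]
  simp only [hfix]
  refine le_of_eq ?_
  rw [← mul_one (B.ι _), ← hC.sum_prod_copyProb_eq_one Finset.sdiff_disjoint a, Finset.mul_sum]
  refine Finset.sum_congr rfl fun b hb => ?_
  rw [← ((hfix b).2 (Finset.mem_filter.1 hb).2).2]
  rfl

theorem IsCutset.sum_cutsetP_le_one (hC : IsCutset B.edges C) (d : Asg C) :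
    ∑ c, cutsetP B C d c ≤ 1 := by
  rw [sum_cutsetP, ← B.ι_dist.2, ← Finset.sum_fiberwise _ (InitSet B.edges).restrict]
  simp only [Finset.filter_filter]
  exact Finset.sum_le_sum fun e _ => hC.sum_bodyWeight_le d e

end CutsetChain

theorem isDist_DiracD {α : Type} [Fintype α] [DecidableEq α] (a : α) : IsDist (DiracD a) :=
  ⟨fun b => by unfold DiracD; split_ifs <;> simp, by simp [DiracD]⟩

theorem LimSem_eq_singleton {B : GBN V} {C : Finset V} {π : Asg C → ℝ}
    (hπ : ∀ γ, IsDist γ → Tendsto (nextSeq B C γ) atTop (nhds π)) :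
    LimSem B C = {Extend B C π} := by
  refine Set.eq_singleton_iff_unique_mem.2 ⟨?_, ?_⟩
  · have hγ := isDist_DiracD (fun _ => false : Asg C)
    exact ⟨_, π, hγ, hπ _ hγ, rfl⟩
  · rintro _ ⟨γ₀, γ, hγ₀, hγ, rfl⟩
    rw [tendsto_nhds_unique hγ (hπ γ₀ hγ₀)]

theorem stmt12_general {V : Type} [Fintype V] [DecidableEq V]
    (B : GBN V) (C : Finset V) (hC : IsCutset B.edges C)
    (hcpt : ∀ X ∈ C, ∀ d, B.cpt X d ∈ Set.Ioo (0 : ℝ) 1) :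
    (∃ μ, LimSem B C = {μ}) ∧
    ∀ γ0 : Asg C → ℝ, IsDist γ0 →
      ∃ γ : Asg C → ℝ, Tendsto (nextSeq B C γ0) atTop (nhds γ) := by
  obtain ⟨δ, hδ, hδP⟩ := exists_minorization_cutsetP hcpt
  obtain ⟨π, hπ⟩ := exists_tendsto_pow_of_minorization (P := Matrix.of (cutsetP B C))
    cutsetP_nonneg hC.sum_cutsetP_le_one hδ hδP
  have hlim (γ : Asg C → ℝ) (hγ : IsDist γ) : Tendsto (nextSeq B C γ) atTop (nhds π) := by
    simpa only [← nextSeq_eq_vecMul_pow] using tendsto_vecMul_pow hπ hγ.2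
  exact ⟨⟨_, LimSem_eq_singleton hlim⟩, fun γ0 hγ0 => ⟨π, hlim γ0 hγ0⟩⟩

/-- For a smooth GBN `B` and every cutset `C`, the limit
semantics `[B]_{Lim-C}` is a singleton, and `Lim(B,C,γ0)` is defined for every
initial cutset distribution `γ0`. -/
theorem stmt12 {V : Type} [Fintype V] [DecidableEq V]
    (B : GBN V) (hs : Smooth B) (C : Finset V) (hC : IsCutset B.edges C) :
    (∃ μ, LimSem B C = {μ}) ∧
    ∀ γ0 : Asg C → ℝ, IsDist γ0 →
      ∃ γ : Asg C → ℝ, Tendsto (nextSeq B C γ0) atTop (nhds γ) :=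
  stmt12_general B C hC fun X _ => hs.1 X

end GBNPaper
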